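/- (Non-unitary Decoupling lemma.) Let m, n ≥ 1, let G be a group, and let ρ_A : G → SL(m,ℂ) and ρ_B : G → SL(n,ℂ) be group homomorphisms whose images are dense in SL(m,ℂ) and SL(n,ℂ) respectively. Assume the following cross-Cauchy condition: for every sequence (g_k) in G, if (ρ_A(g_k)) is a Cauchy sequence then some subsequence (g_{k_j}) makes (ρ_B(g_{k_j})) Cauchy, and symmetrically with A and B exchanged. Then: (i) if m ≠ n, full decoupling holds: for every V_A ∈ SL(m,ℂ) and V_B ∈ SL(n,ℂ) there exists a sequence (g_k) in G with ρ_A(g_k) → V_A and ρ_B(g_k) → V_B; (ii) if m = n, then either full decoupling holds, or for every sequence (g_k) with ρ_A(g_k) → I there is a subsequence along which ρ_B(g_{k_j}) converges to an element of the center of SL(n,ℂ), and symmetrically with A and B exchanged. -/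

import Mathlib

open Filter

/-!
Let `H` be the closure of `{(ρA g, ρB g)}` in `SL(m) × SL(n)`. The subsequence condition makes both
projections of `H` surjective and makes the fibre `{b | (1, b) ∈ H}` sequentially compact. This
fibre is a normal subgroup of `SL(n)`, and conjugating a noncentral element by the transvections
`1 + t Eᵢⱼ`, `t → ∞`, leaves every compact set; so the fibre is central, and likewise on the other
side. Thus `H` is the graph of an isomorphism between quotients of `SL(m)` and `SL(n)` by central
subgroups. For a large prime `p` such a quotient of `SL(n)` contains a diagonal `(ℤ/p)ⁿ⁻¹`, and
commuting elements of order `p` lift to commuting elements of order `p`; simultaneous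
diagonalization in `SL(m)` allows at most `p ^ (m - 1)` of them. Hence `m = n`,
and centrality of the fibres is the second alternative of (ii).
-/

open Topology Module
open scoped commutatorElement

local notation "SL" => Matrix.SpecialLinearGroup

section TopologicalGroup

variable {G A B : Type*} [Group G] [Group A] [TopologicalSpace A] [Group B] [TopologicalSpace B]

/-- The sequential form of the cross-Cauchy condition, in one direction: if `ρA` converges along a
sequence, then `ρB` converges along a subsequence. -/
def SubseqLifts (ρA : G →* A) (ρB : G →* B) : Prop :=
  ∀ ⦃g : ℕ → G⦄ ⦃a : A⦄, Tendsto (fun k => ρA (g k)) atTop (𝓝 a) →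
    ∃ φ : ℕ → ℕ, StrictMono φ ∧ ∃ b, Tendsto (fun j => ρB (g (φ j))) atTop (𝓝 b)

/-- `ρB` is coupled to `ρA`: along any sequence on which `ρA` tends to `1`, some subsequence of
`ρB` tends to a central element. -/
def CentrallyCoupled (ρA : G →* A) (ρB : G →* B) : Prop :=
  ∀ ⦃g : ℕ → G⦄, Tendsto (fun k => ρA (g k)) atTop (𝓝 1) →
    ∃ φ : ℕ → ℕ, StrictMono φ ∧ ∃ z ∈ Subgroup.center B,
      Tendsto (fun j => ρB (g (φ j))) atTop (𝓝 z)

theorem exists_seq_mem_tendsto_div_nhds_one [IsTopologicalGroup A] [FirstCountableTopology A]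
    {s : Set A} {x : ℕ → A} (hx : ∀ k, x k ∈ closure s) :
    ∃ y : ℕ → A, (∀ k, y k ∈ s) ∧ Tendsto (fun k => y k / x k) atTop (𝓝 1) := by
  obtain ⟨U, hU⟩ := (𝓝 (1 : A)).exists_antitone_basis
  have hclose (k : ℕ) : ∃ y ∈ s, y / x k ∈ U k := by
    have hdiv : Tendsto (· / x k) (𝓝 (x k)) (𝓝 1) := by
      simpa only [id, div_self'] using (continuous_id.div_const (x k)).tendsto (x k)
    obtain ⟨y, hyU, hys⟩ := mem_closure_iff_nhds.1 (hx k) _ (hdiv (hU.mem k))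
    exact ⟨y, hys, hyU⟩
  choose y hys hyU using hclose
  exact ⟨y, hys, hU.tendsto hyU⟩

variable [IsTopologicalGroup A] [IsTopologicalGroup B] {ρA : G →* A} {ρB : G →* B}

/-- The closure of the joint image `{(ρA g, ρB g) | g : G}`, viewed as a relation between
`A` and `B`. -/
def jointClosure (ρA : G →* A) (ρB : G →* B) : Subgroup (A × B) :=
  (ρA.prod ρB).range.topologicalClosure

theorem isClosed_jointClosure : IsClosed (jointClosure ρA ρB : Set (A × B)) :=
  Subgroup.isClosed_topologicalClosure _

theorem map_mem_jointClosure (g : G) : (ρA g, ρB g) ∈ jointClosure ρA ρB :=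
  Subgroup.le_topologicalClosure _ ⟨g, rfl⟩

theorem swap_mem_jointClosure {x : A × B} (hx : x ∈ jointClosure ρA ρB) :
    x.swap ∈ jointClosure ρB ρA :=
  map_mem_closure (t := ((ρB.prod ρA).range : Set (B × A))) continuous_swap hx <| by
    rintro _ ⟨g, rfl⟩
    exact ⟨g, rfl⟩

theorem goursatFst_jointClosure_le :
    (jointClosure ρA ρB).goursatFst ≤ (jointClosure ρB ρA).goursatSnd := fun a ha => by
  rw [Subgroup.mem_goursatFst] at ha
  exact Subgroup.mem_goursatSnd.2 (swap_mem_jointClosure ha)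

theorem isClosed_goursatSnd_jointClosure :
    IsClosed ((jointClosure ρA ρB).goursatSnd : Set B) := by
  have hfibre : ((jointClosure ρA ρB).goursatSnd : Set B) =
      (fun b => ((1 : A), b)) ⁻¹' (jointClosure ρA ρB : Set (A × B)) := by
    ext b
    exact Subgroup.mem_goursatSnd
  rw [hfibre]
  exact isClosed_jointClosure.preimage (by fun_prop)

theorem normal_goursatSnd_jointClosure (hB : DenseRange ρB) :
    (jointClosure ρA ρB).goursatSnd.Normal where
  conj_mem b hb u := by
    refine hB.induction_on (p := fun u => u * b * u⁻¹ ∈ (jointClosure ρA ρB).goursatSnd) u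
      (isClosed_goursatSnd_jointClosure.preimage (by fun_prop)) fun g => ?_
    have hg := map_mem_jointClosure (ρA := ρA) (ρB := ρB) g
    rw [Subgroup.mem_goursatSnd] at hb ⊢
    simpa using mul_mem (mul_mem hg hb) (inv_mem hg)

namespace SubseqLifts

theorem exists_mem_jointClosure (h : SubseqLifts ρA ρB) {g : ℕ → G} {a : A}
    (hg : Tendsto (fun k => ρA (g k)) atTop (𝓝 a)) :
    ∃ φ : ℕ → ℕ, StrictMono φ ∧ ∃ b, (a, b) ∈ jointClosure ρA ρB ∧
      Tendsto (fun j => ρB (g (φ j))) atTop (𝓝 b) := by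
  obtain ⟨φ, hφ, b, hb⟩ := h hg
  exact ⟨φ, hφ, b, isClosed_jointClosure.mem_of_tendsto
    ((hg.comp hφ.tendsto_atTop).prodMk_nhds hb)
    (.of_forall fun j => map_mem_jointClosure (g (φ j))), hb⟩

theorem surjective_snd [FirstCountableTopology A] (h : SubseqLifts ρA ρB) (hA : DenseRange ρA) :
    Function.Surjective (Prod.snd ∘ (jointClosure ρB ρA).subtype) := by
  intro a
  obtain ⟨x, hx, hxa⟩ := mem_closure_iff_seq_limit.1 (hA a)
  choose g hg using hx
  obtain ⟨_, _, b, hab, _⟩ := h.exists_mem_jointClosure (g := g) (by simpa only [hg] using hxa)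
  exact ⟨⟨(b, a), swap_mem_jointClosure hab⟩, rfl⟩

theorem isSeqCompact_goursatSnd [FirstCountableTopology A] [FirstCountableTopology B]
    (h : SubseqLifts ρA ρB) : IsSeqCompact ((jointClosure ρA ρB).goursatSnd : Set B) := by
  intro b hb
  obtain ⟨y, hy, hyb⟩ := exists_seq_mem_tendsto_div_nhds_one
    (s := ((ρA.prod ρB).range : Set (A × B))) (x := fun k => (1, b k))
    fun k => Subgroup.mem_goursatSnd.1 (hb k)
  choose g hg using hy
  obtain rfl : (fun k => (ρA (g k), ρB (g k))) = y := funext hg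
  have hgA : Tendsto (fun k => ρA (g k)) atTop (𝓝 1) := by
    simpa [Function.comp_def] using (continuous_fst.tendsto _).comp hyb
  have hgB : Tendsto (fun k => ρB (g k) / b k) atTop (𝓝 1) := (continuous_snd.tendsto _).comp hyb
  obtain ⟨φ, hφ, c, hc⟩ := h hgA
  have hbc : Tendsto (b ∘ φ) atTop (𝓝 c) := by
    simpa [Function.comp_def] using (hgB.comp hφ.tendsto_atTop).inv.mul hc
  exact ⟨c, isClosed_goursatSnd_jointClosure.mem_of_tendsto hbc (.of_forall fun j => hb (φ j)),
    φ, hφ, hbc⟩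

theorem centrallyCoupled (h : SubseqLifts ρA ρB)
    (hcenter : (jointClosure ρA ρB).goursatSnd ≤ Subgroup.center B) : CentrallyCoupled ρA ρB := by
  intro g hg
  obtain ⟨φ, hφ, b, hb, hlim⟩ := h.exists_mem_jointClosure hg
  exact ⟨φ, hφ, b, hcenter (Subgroup.mem_goursatSnd.2 hb), hlim⟩

end SubseqLifts

end TopologicalGroup

section SpecialLinearTopology

variable {ι K : Type*} [Fintype ι] [DecidableEq ι]

theorem isInducing_coe_specialLinearGroup [CommRing K] [TopologicalSpace K] :
    IsInducing ((↑) : SL ι K → Matrix ι ι K) :=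
  IsInducing.subtypeVal

theorem tendsto_specialLinearGroup_iff [CommRing K] [TopologicalSpace K] {α : Type*} {l : Filter α}
    {f : α → SL ι K} {a : SL ι K} :
    Tendsto f l (𝓝 a) ↔
      Tendsto (fun k => (f k : Matrix ι ι K)) l (𝓝 (a : Matrix ι ι K)) :=
  isInducing_coe_specialLinearGroup.tendsto_nhds_iff

theorem denseRange_specialLinearGroup_iff [CommRing K] [TopologicalSpace K] {G : Type*}
    {ρ : G → SL ι K} :
    DenseRange ρ ↔ {M : Matrix ι ι K | M.det = 1} ⊆
      closure (Set.range fun g => (ρ g : Matrix ι ι K)) := by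
  have hrange : Set.range (fun g => (ρ g : Matrix ι ι K)) =
      ((↑) : SL ι K → Matrix ι ι K) '' Set.range ρ := Set.range_comp _ _
  rw [hrange]
  exact isInducing_coe_specialLinearGroup.dense_iff.trans Subtype.forall

theorem firstCountableTopology_specialLinearGroup [CommRing K] [TopologicalSpace K]
    [FirstCountableTopology K] : FirstCountableTopology (SL ι K) :=
  have : FirstCountableTopology (Matrix ι ι K) :=
    inferInstanceAs (FirstCountableTopology (ι → ι → K))
  isInducing_coe_specialLinearGroup.firstCountableTopology

theorem exists_tendsto_specialLinearGroup_of_cauchySeq [CommRing K] [UniformSpace K]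
    [IsTopologicalRing K] [T1Space K] [CompleteSpace K] {f : ℕ → SL ι K}
    (hf : CauchySeq fun k => (f k : Matrix ι ι K)) : ∃ a, Tendsto f atTop (𝓝 a) := by
  obtain ⟨M, hM⟩ := cauchySeq_tendsto_of_complete hf
  have hclosed := (Matrix.SpecialLinearGroup.isClosedEmbedding_val (n := ι) (R := K)).isClosed_range
  obtain ⟨a, rfl⟩ := hclosed.mem_of_tendsto hM (.of_forall fun k => ⟨f k, rfl⟩)
  exact ⟨a, tendsto_specialLinearGroup_iff.2 hM⟩

theorem subseqLifts_of_cauchySeq {κ G : Type*} [Fintype κ] [DecidableEq κ] [Group G]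
    [CommRing K] [UniformSpace K] [IsTopologicalRing K] [T1Space K] [CompleteSpace K]
    {ρA : G →* SL ι K} {ρB : G →* SL κ K}
    (h : ∀ g : ℕ → G, CauchySeq (fun k => (ρA (g k) : Matrix ι ι K)) →
      ∃ φ : ℕ → ℕ, StrictMono φ ∧ CauchySeq fun j => (ρB (g (φ j)) : Matrix κ κ K)) :
    SubseqLifts ρA ρB := by
  intro g a hg
  obtain ⟨φ, hφ, hcauchy⟩ := h g (tendsto_specialLinearGroup_iff.1 hg).cauchySeq
  exact ⟨φ, hφ, exists_tendsto_specialLinearGroup_of_cauchySeq hcauchy⟩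

theorem CentrallyCoupled.exists_tendsto_commute {κ G : Type*} [Fintype κ] [DecidableEq κ] [Group G]
    [CommRing K] [TopologicalSpace K] {ρA : G →* SL ι K} {ρB : G →* SL κ K}
    (h : CentrallyCoupled ρA ρB) (g : ℕ → G)
    (hg : Tendsto (fun k => (ρA (g k) : Matrix ι ι K)) atTop (𝓝 1)) :
    ∃ φ : ℕ → ℕ, StrictMono φ ∧ ∃ Z : Matrix κ κ K, Z.det = 1 ∧
      (∀ M : Matrix κ κ K, M.det = 1 → Z * M = M * Z) ∧
      Tendsto (fun j => (ρB (g (φ j)) : Matrix κ κ K)) atTop (𝓝 Z) := by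
  obtain ⟨φ, hφ, z, hz, hlim⟩ := h (tendsto_specialLinearGroup_iff.2 hg)
  refine ⟨φ, hφ, z, z.2, fun M hM => ?_, tendsto_specialLinearGroup_iff.1 hlim⟩
  exact congrArg Subtype.val (Subgroup.mem_center_iff.1 hz ⟨M, hM⟩).symm

end SpecialLinearTopology

section SeqCompactNormal

theorem tendsto_zero_of_tendsto_inv_smul {K V α : Type*} [DivisionRing K] [TopologicalSpace K]
    [AddCommGroup V] [Module K V] [TopologicalSpace V] [ContinuousSMul K V] {l : Filter α}
    {t : α → K} {x : α → V} {v : V} (ht : Tendsto t l (𝓝[≠] 0))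
    (hx : Tendsto (fun k => (t k)⁻¹ • x k) l (𝓝 v)) : Tendsto x l (𝓝 0) := by
  obtain ⟨ht0, hne⟩ := tendsto_nhdsWithin_iff.1 ht
  have hlim := ht0.smul hx
  rw [zero_smul] at hlim
  refine hlim.congr' ?_
  filter_upwards [hne] with k hk using smul_inv_smul₀ hk (x k)

theorem eq_zero_of_tendsto_add_inv_smul {K V α : Type*} [DivisionRing K] [TopologicalSpace K]
    [AddCommGroup V] [Module K V] [TopologicalSpace V] [IsTopologicalAddGroup V]
    [ContinuousSMul K V] [T2Space V] {l : Filter α} [l.NeBot]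
    {t : α → K} {u x y v : V} (ht : Tendsto t l (𝓝[≠] 0))
    (h : Tendsto (fun k => u + (t k)⁻¹ • (x - (t k)⁻¹ • y)) l (𝓝 v)) : x = 0 := by
  have hxy : Tendsto (fun k => x - (t k)⁻¹ • y) l (𝓝 0) :=
    tendsto_zero_of_tendsto_inv_smul ht (v := v - u) <| by simpa using h.sub_const u
  have hy : y = 0 := tendsto_nhds_unique tendsto_const_nhds <|
    tendsto_zero_of_tendsto_inv_smul ht (v := x) <| by simpa using hxy.const_sub x
  simpa [hy] using hxy

variable {ι K : Type*} [Fintype ι] [DecidableEq ι]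

theorem coe_transvection_conj [CommRing K] {i j : ι} (hij : i ≠ j) (c : K) (b : SL ι K) :
    ((.transvection hij c * b * (.transvection hij c)⁻¹ : SL ι K) : Matrix ι ι K) =
      b + c • ((.single i j 1 * b - b * .single i j 1) -
        c • (.single i j 1 * b * .single i j 1 : Matrix ι ι K)) := by
  have hcoe (c : K) : (Matrix.SpecialLinearGroup.transvection hij c : Matrix ι ι K) =
      1 + c • .single i j 1 := by
    simp [Matrix.SpecialLinearGroup.transvection_coe]
  rw [Matrix.SpecialLinearGroup.transvection_inv, Matrix.SpecialLinearGroup.coe_mul,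
    Matrix.SpecialLinearGroup.coe_mul, hcoe, hcoe]
  simp only [add_mul, mul_add, one_mul, mul_one, smul_mul_assoc, mul_smul_comm, mul_neg, smul_sub,
    smul_add, neg_smul]
  abel

theorem mem_center_of_forall_commute_single [CommRing K] {b : SL ι K}
    (h : ∀ i j, i ≠ j → Commute (.single i j 1) (b : Matrix ι ι K)) :
    b ∈ Subgroup.center (SL ι K) := by
  obtain ⟨r, hr⟩ := Matrix.mem_range_scalar_of_commute_single fun i j hij => h i j hij
  refine Matrix.SpecialLinearGroup.mem_center_iff.2 ⟨r, ?_, hr⟩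
  have hdet := b.det_coe
  rwa [← hr, Matrix.scalar_apply, Matrix.det_diagonal, Finset.prod_const, Finset.card_univ] at hdet

theorem le_center_of_isSeqCompact [Field K] [TopologicalSpace K]
    [IsTopologicalRing K] [T2Space K] [FirstCountableTopology K] [(𝓝[≠] (0 : K)).NeBot]
    {N : Subgroup (SL ι K)} [hN : N.Normal] (hc : IsSeqCompact (N : Set (SL ι K))) :
    N ≤ Subgroup.center (SL ι K) := by
  intro b hb
  refine mem_center_of_forall_commute_single fun i j hij => ?_
  obtain ⟨t, ht⟩ := exists_seq_tendsto (𝓝[≠] (0 : K))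
  obtain ⟨c, -, φ, hφ, hlim⟩ := hc fun k => hN.conj_mem b hb (.transvection hij (t k)⁻¹)
  replace hlim := tendsto_specialLinearGroup_iff.1 hlim
  simp only [Function.comp_apply, coe_transvection_conj] at hlim
  exact sub_eq_zero.1 (eq_zero_of_tendsto_add_inv_smul (ht.comp hφ.tendsto_atTop) hlim)

end SeqCompactNormal

section CommutingTorsion

/-- A family of distinct, pairwise commuting solutions of `x ^ p = 1`. For `p` prime this is a
subset of an elementary abelian `p`-subgroup; the families are counted to compare `SL(m)` with
`SL(n)`. -/
structure IsCommutingTorsion {T M : Type*} [Monoid M] (p : ℕ) (d : T → M) : Prop where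
  injective : Function.Injective d
  commute : ∀ s t, Commute (d s) (d t)
  pow_eq_one : ∀ t, d t ^ p = 1

theorem commute_of_commutator_mem_center {A : Type*} [Group A] {a b : A} {q p : ℕ}
    (hqp : q.Coprime p) (hb : b ^ p = 1) (hc : ⁅a, b⁆ ∈ Subgroup.center A)
    (hq : ⁅a, b⁆ ^ q = 1) : Commute a b := by
  have hconj : ⁅a, b⁆ * b = a * b * a⁻¹ := by rw [commutatorElement_def]; group
  have hcomm : Commute ⁅a, b⁆ b := (Subgroup.mem_center_iff.1 hc b).symm
  have hp : ⁅a, b⁆ ^ p = 1 := by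
    simpa [hcomm.mul_pow, conj_pow, hb] using congrArg (· ^ p) hconj
  exact commutatorElement_eq_one_iff_commute.1 ((pow_eq_one_iff_of_coprime hqp).1 ⟨hq, hp⟩)

namespace IsCommutingTorsion

variable {T : Type*} {p : ℕ}

theorem map {M N F : Type*} [Monoid M] [Monoid N] [FunLike F M N] [MonoidHomClass F M N]
    {d : T → M} (hd : IsCommutingTorsion p d) {f : F} (hf : Function.Injective f) :
    IsCommutingTorsion p fun t => f (d t) where
  injective := hf.comp hd.injective
  commute s t := (hd.commute s t).map f
  pow_eq_one t := by rw [← map_pow, hd.pow_eq_one, map_one]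

theorem exists_lift {A B : Type*} [Group A] [Group B] {H : Subgroup (A × B)}
    (hH : Function.Surjective (Prod.snd ∘ H.subtype)) {q r : ℕ} (hq : q.Coprime p)
    (hr : r.Coprime p) (hA : H.goursatFst ≤ Subgroup.center A)
    (hAq : ∀ a ∈ H.goursatFst, a ^ q = 1) (hBr : ∀ b ∈ H.goursatSnd, b ^ r = 1)
    {d : T → B} (hd : IsCommutingTorsion p d) : ∃ a : T → A, IsCommutingTorsion p a := by
  have hlift (t : T) : ∃ a, (a, d t) ∈ H := by
    obtain ⟨⟨⟨a, b⟩, hab⟩, hb⟩ := hH (d t)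
    obtain rfl : b = d t := hb
    exact ⟨a, hab⟩
  choose a ha using hlift
  -- `a t ^ p` lies in the fibre over `1`, so the `q`-th power removes the obstruction to order `p`.
  have hpow (t : T) : (a t ^ q) ^ p = 1 := by
    rw [← pow_mul, mul_comm, pow_mul]
    exact hAq _ (Subgroup.mem_goursatFst.2 (by simpa [hd.pow_eq_one] using pow_mem (ha t) p))
  have haq (t : T) : (a t ^ q, d t ^ q) ∈ H := pow_mem (ha t) q
  refine ⟨fun t => a t ^ q, fun s t hst => ?_, fun s t => ?_, hpow⟩
  · have hmem : d s ^ q * (d t ^ q)⁻¹ ∈ H.goursatSnd :=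
      Subgroup.mem_goursatSnd.2 (by simpa [hst] using mul_mem (haq s) (inv_mem (haq t)))
    have hcomm : Commute (d s) (d t)⁻¹ := (hd.commute s t).inv_right
    have hdiv : (d s * (d t)⁻¹) ^ p = 1 := by simp [hcomm.mul_pow, hd.pow_eq_one]
    rw [← inv_pow, ← hcomm.mul_pow] at hmem
    have hq1 : (d s * (d t)⁻¹) ^ q = 1 := (pow_eq_one_iff_of_coprime hr).1
      ⟨hBr _ hmem, by rw [← pow_mul, mul_comm, pow_mul, hdiv, one_pow]⟩
    exact hd.injective (mul_inv_eq_one.1 ((pow_eq_one_iff_of_coprime hq).1 ⟨hq1, hdiv⟩))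
  · have hmem : ⁅a s ^ q, a t ^ q⁆ ∈ H.goursatFst := by
      have hcomm : ⁅d s ^ q, d t ^ q⁆ = 1 :=
        commutatorElement_eq_one_iff_commute.2 ((hd.commute s t).pow_pow q q)
      rw [Subgroup.mem_goursatFst, ← hcomm]
      exact mul_mem (mul_mem (mul_mem (haq s) (haq t)) (inv_mem (haq s))) (inv_mem (haq t))
    exact commute_of_commutator_mem_center hq (hpow t) (hA hmem) (hAq _ hmem)

end IsCommutingTorsion

end CommutingTorsion

section SimultaneousDiagonalization

variable {T K V : Type*} [Field K] [AddCommGroup V] [Module K V] {p : ℕ}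

theorem isSemisimple_of_pow_eq_one {f : End K V} (hp : (p : K) ≠ 0) (hf : f ^ p = 1) :
    f.IsSemisimple := by
  have hsep : (Polynomial.X ^ p - Polynomial.C (1 : K)).Separable :=
    Polynomial.separable_X_pow_sub_C 1 hp one_ne_zero
  exact End.isSemisimple_of_squarefree_aeval_eq_zero hsep.squarefree (by simp [hf])

variable [IsAlgClosed K] [FiniteDimensional K V]

theorem exists_basis_forall_apply_eq_smul {f : T → End K V} (hcomm : ∀ s t, Commute (f s) (f t))
    (hss : ∀ t, (f t).IsSemisimple) :
    ∃ b : Basis (Fin (finrank K V)) K V, ∀ t k, ∃ c : K, f t (b k) = c • b k := by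
  let S : Set V := {v | ∀ t, ∃ c : K, f t v = c • v}
  have hS : ⊤ ≤ Submodule.span K S := by
    rw [← End.iSup_iInf_maxGenEigenspace_eq_top_of_iSup_maxGenEigenspace_eq_top_of_commute f
      (fun s t _ => hcomm s t) fun t => End.iSup_maxGenEigenspace_eq_top (f t)]
    refine iSup_le fun χ v hv => Submodule.subset_span fun t => ⟨χ t, ?_⟩
    have hvt := (Submodule.mem_iInf _).1 hv t
    rw [(hss t).isFinitelySemisimple.maxGenEigenspace_eq_eigenspace] at hvt
    exact End.mem_eigenspace_iff.1 hvt
  let b := Basis.ofSpan hS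
  have := FiniteDimensional.fintypeBasisIndex b
  refine ⟨b.reindex (Fintype.equivFinOfCardEq (finrank_eq_card_basis b).symm), fun t k => ?_⟩
  rw [Basis.reindex_apply]
  exact Basis.ofSpan_subset hS ⟨_, rfl⟩ t

theorem IsCommutingTorsion.card_le_pow_finrank {f : T → End K V} (hf : IsCommutingTorsion p f)
    (hp : (p : K) ≠ 0) : Nat.card T ≤ p ^ finrank K V := by
  have : NeZero p := ⟨by rintro rfl; simp at hp⟩
  obtain ⟨b, hb⟩ := exists_basis_forall_apply_eq_smul hf.commute
    fun t => isSemisimple_of_pow_eq_one hp (hf.pow_eq_one t)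
  choose c hc using hb
  have hcp (t : T) (k) : c t k ^ p = 1 := by
    have hev : (f t).HasEigenvector (c t k) (b k) :=
      ⟨End.mem_eigenspace_iff.2 (hc t k), b.ne_zero k⟩
    have hpow := hev.pow_apply p
    rw [hf.pow_eq_one, End.one_apply] at hpow
    exact (smul_left_injective K (b.ne_zero k) (by simpa using hpow)).symm
  let eigenvalues (t : T) (k : Fin (finrank K V)) : rootsOfUnity p K :=
    rootsOfUnity.mkOfPowEq (c t k) (hcp t k)
  have hinj : Function.Injective eigenvalues := fun s t hst =>
    hf.injective <| b.ext fun k => by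
      have hck : c s k = c t k := by
        simpa [eigenvalues] using
          congrArg (fun z : rootsOfUnity p K => ((z : Kˣ) : K)) (congrFun hst k)
      rw [hc, hc, hck]
  calc Nat.card T ≤ Nat.card (Fin (finrank K V) → rootsOfUnity p K) :=
        Nat.card_le_card_of_injective eigenvalues hinj
    _ = Nat.card (rootsOfUnity p K) ^ finrank K V := by rw [Nat.card_fun, Nat.card_fin]
    _ ≤ p ^ finrank K V := Nat.pow_le_pow_left (card_rootsOfUnity K p) _

end SimultaneousDiagonalization

section SpecialLinearTorsion

variable {ι K : Type*} [Fintype ι] [Field K] {p : ℕ}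

/-- The subgroup of `(μ_p)^ι` that parametrizes the diagonal matrices of determinant `1` whose
entries are `p`-th roots of unity. -/
def rootsOfUnityTorus (ι K : Type*) [Fintype ι] [Field K] (p : ℕ) :
    Subgroup (ι → rootsOfUnity p K) :=
  (∏ i, Pi.evalMonoidHom (fun _ : ι => rootsOfUnity p K) i).ker

theorem pow_card_le_card_rootsOfUnityTorus_mul [IsAlgClosed K] (hp : (p : K) ≠ 0) :
    p ^ Fintype.card ι ≤ Nat.card (rootsOfUnityTorus ι K p) * p := by
  have : NeZero (p : K) := ⟨hp⟩
  have : NeZero p := .of_neZero_natCast K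
  have hμ : Nat.card (rootsOfUnity p K) = p := HasEnoughRootsOfUnity.natCard_rootsOfUnity K p
  calc p ^ Fintype.card ι = Nat.card (ι → rootsOfUnity p K) := by
        rw [Nat.card_fun, hμ, Nat.card_eq_fintype_card]
    _ = Nat.card (rootsOfUnityTorus ι K p) * (rootsOfUnityTorus ι K p).index :=
        (Subgroup.card_mul_index _).symm
    _ ≤ Nat.card (rootsOfUnityTorus ι K p) * p := by
        refine Nat.mul_le_mul_left _ ?_
        rw [rootsOfUnityTorus, Subgroup.index_ker]
        exact (Subgroup.card_le_card_group _).trans_eq hμ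

variable [DecidableEq ι]

theorem IsCommutingTorsion.smul_rootsOfUnity {T : Type*} {a : T → SL ι K}
    (ha : IsCommutingTorsion p a) (hι : (Fintype.card ι).Coprime p) :
    IsCommutingTorsion p fun x : T × rootsOfUnity p K =>
      ((x.2 : Kˣ) : K) • (a x.1 : Matrix ι ι K) where
  injective := by
    rintro ⟨s, v⟩ ⟨t, w⟩ h
    have hdet : v ^ Fintype.card ι = w ^ Fintype.card ι := by
      ext
      simpa [Matrix.det_smul] using congrArg Matrix.det h
    have hvw : v / w = 1 := (pow_eq_one_iff_of_coprime hι).1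
      ⟨by rw [div_pow, hdet, div_self'], Subtype.ext (v / w).2⟩
    obtain rfl := div_eq_one.1 hvw
    have hst : (a s : Matrix ι ι K) = a t := smul_right_injective _ (v : Kˣ).ne_zero h
    rw [ha.injective (Subtype.ext hst)]
  commute x y :=
    (((ha.commute x.1 y.1).map Matrix.SpecialLinearGroup.coeMonoidHom).smul_left _).smul_right _
  pow_eq_one x := by
    rw [smul_pow, ← Matrix.SpecialLinearGroup.coe_pow, ha.pow_eq_one,
      (mem_rootsOfUnity' p _).1 x.2.2, one_smul, Matrix.SpecialLinearGroup.coe_one]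

theorem IsCommutingTorsion.card_mul_le [IsAlgClosed K] {T : Type*} {a : T → SL ι K}
    (ha : IsCommutingTorsion p a) (hp : (p : K) ≠ 0) (hι : (Fintype.card ι).Coprime p) :
    Nat.card T * p ≤ p ^ Fintype.card ι := by
  have : NeZero (p : K) := ⟨hp⟩
  have : NeZero p := .of_neZero_natCast K
  have hcard := ((ha.smul_rootsOfUnity hι).map
    (Matrix.toLinAlgEquiv' (R := K) (n := ι)).injective).card_le_pow_finrank hp
  rwa [Nat.card_prod, HasEnoughRootsOfUnity.natCard_rootsOfUnity, finrank_fintype_fun_eq_card]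
    at hcard

/-- The diagonal embedding of the `p`-torsion torus into `SL`. -/
def rootsOfUnityTorus.diagonal (x : rootsOfUnityTorus ι K p) : SL ι K :=
  ⟨.diagonal fun i => ((x.1 i : Kˣ) : K), by
    have hprod : ∏ i, x.1 i = 1 := by
      simpa [rootsOfUnityTorus, MonoidHom.mem_ker, MonoidHom.finsetProd_apply] using x.2
    simpa [Matrix.det_diagonal] using congrArg (fun z : rootsOfUnity p K => ((z : Kˣ) : K)) hprod⟩

theorem rootsOfUnityTorus.isCommutingTorsion_diagonal :
    IsCommutingTorsion p (rootsOfUnityTorus.diagonal : rootsOfUnityTorus ι K p → SL ι K) where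
  injective x y hxy := by
    ext i
    exact congrFun (Matrix.diagonal_injective (congrArg Subtype.val hxy)) i
  commute x y := Subtype.ext (Matrix.commute_diagonal _ _)
  pow_eq_one x := by
    have hpow : (fun i => ((x.1 i : Kˣ) : K)) ^ p = 1 :=
      funext fun i => (mem_rootsOfUnity' p _).1 (x.1 i).2
    refine Subtype.ext ((Matrix.diagonal_pow _ p).trans ?_)
    rw [hpow]
    exact Matrix.diagonal_one

theorem pow_card_eq_one_of_mem_center {z : SL ι K} (hz : z ∈ Subgroup.center (SL ι K)) :
    z ^ Fintype.card ι = 1 := by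
  obtain ⟨r, hr, hrz⟩ := Matrix.SpecialLinearGroup.mem_center_iff.1 hz
  refine Subtype.ext ?_
  rw [Matrix.SpecialLinearGroup.coe_pow, ← hrz, ← map_pow, hr, map_one,
    Matrix.SpecialLinearGroup.coe_one]

theorem exists_prime_gt_natCast_ne_zero (K : Type*) [Field K] (N : ℕ) :
    ∃ p, N < p ∧ p.Prime ∧ (p : K) ≠ 0 := by
  obtain ⟨p, hlt, hp⟩ := Nat.exists_infinite_primes (max N (ringChar K) + 1)
  refine ⟨p, by lia, hp, fun h0 => ?_⟩
  rcases (Nat.dvd_prime hp).1 (ringChar.dvd h0) with h1 | hchar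
  · exact CharP.ringChar_ne_one h1
  · lia

theorem card_le_card_of_goursat_le_center [IsAlgClosed K] {κ : Type*} [Fintype κ] [DecidableEq κ]
    [Nonempty ι] [Nonempty κ] {H : Subgroup (SL ι K × SL κ K)}
    (hH : Function.Surjective (Prod.snd ∘ H.subtype))
    (hfst : H.goursatFst ≤ Subgroup.center (SL ι K))
    (hsnd : H.goursatSnd ≤ Subgroup.center (SL κ K)) : Fintype.card κ ≤ Fintype.card ι := by
  obtain ⟨p, hlt, hp, hpK⟩ := exists_prime_gt_natCast_ne_zero K (Fintype.card ι + Fintype.card κ)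
  have hι : (Fintype.card ι).Coprime p :=
    (Nat.coprime_of_lt_prime Fintype.card_ne_zero (by lia) hp).symm
  have hκ : (Fintype.card κ).Coprime p :=
    (Nat.coprime_of_lt_prime Fintype.card_ne_zero (by lia) hp).symm
  obtain ⟨a, ha⟩ := (rootsOfUnityTorus.isCommutingTorsion_diagonal (ι := κ) (K := K)).exists_lift hH
    hι hκ hfst (fun a ha => pow_card_eq_one_of_mem_center (hfst ha))
    (fun b hb => pow_card_eq_one_of_mem_center (hsnd hb))
  refine (Nat.pow_le_pow_iff_right hp.one_lt).1 ?_
  exact (pow_card_le_card_rootsOfUnityTorus_mul hpK).trans (ha.card_mul_le hpK hι)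

end SpecialLinearTorsion

section Coupling

variable {G K : Type*} [Group G] [Field K] [TopologicalSpace K] [IsTopologicalRing K] [T2Space K]
  [FirstCountableTopology K] [(𝓝[≠] (0 : K)).NeBot]

namespace SubseqLifts

variable {ι κ : Type*} [Fintype ι] [DecidableEq ι] [Fintype κ] [DecidableEq κ]
  {ρA : G →* SL ι K} {ρB : G →* SL κ K}

theorem goursatSnd_le_center (h : SubseqLifts ρA ρB) (hB : DenseRange ρB) :
    (jointClosure ρA ρB).goursatSnd ≤ Subgroup.center (SL κ K) :=
  have := firstCountableTopology_specialLinearGroup (ι := ι) (K := K)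
  have := firstCountableTopology_specialLinearGroup (ι := κ) (K := K)
  have := normal_goursatSnd_jointClosure (ρA := ρA) hB
  le_center_of_isSeqCompact h.isSeqCompact_goursatSnd

theorem card_le_card [IsAlgClosed K] [Nonempty ι] [Nonempty κ]
    (hAB : SubseqLifts ρA ρB) (hBA : SubseqLifts ρB ρA) (hA : DenseRange ρA)
    (hB : DenseRange ρB) : Fintype.card ι ≤ Fintype.card κ :=
  have := firstCountableTopology_specialLinearGroup (ι := ι) (K := K)
  card_le_card_of_goursat_le_center (hAB.surjective_snd hA)
    (goursatFst_jointClosure_le.trans (hAB.goursatSnd_le_center hB)) (hBA.goursatSnd_le_center hA)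

end SubseqLifts

theorem stmt14_general [IsAlgClosed K] {m n : ℕ} (hm : 1 ≤ m) (hn : 1 ≤ n)
    {ρA : G →* SL (Fin m) K} {ρB : G →* SL (Fin n) K} (hA : DenseRange ρA) (hB : DenseRange ρB)
    (hAB : SubseqLifts ρA ρB) (hBA : SubseqLifts ρB ρA) :
    m = n ∧ CentrallyCoupled ρA ρB ∧ CentrallyCoupled ρB ρA := by
  have : Nonempty (Fin m) := ⟨⟨0, hm⟩⟩
  have : Nonempty (Fin n) := ⟨⟨0, hn⟩⟩
  have hcard : Fintype.card (Fin m) = Fintype.card (Fin n) :=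
    (hAB.card_le_card hBA hA hB).antisymm (hBA.card_le_card hAB hB hA)
  exact ⟨by simpa only [Fintype.card_fin] using hcard,
    hAB.centrallyCoupled (hAB.goursatSnd_le_center hB),
    hBA.centrallyCoupled (hBA.goursatSnd_le_center hA)⟩

end Coupling

/-- Non-unitary Decoupling lemma for a pair of homomorphisms into `SL(m,ℂ)` and
`SL(n,ℂ)` with dense images satisfying the cross-Cauchy condition: if `m ≠ n` full
decoupling holds; if `m = n`, either full decoupling holds, or sequences converging
to the identity on one side subconverge to a central element on the other side. -/
theorem stmt14 {G : Type*} [Group G] (m n : ℕ) (hm : 1 ≤ m) (hn : 1 ≤ n)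
    (ρA : G →* Matrix.SpecialLinearGroup (Fin m) ℂ)
    (ρB : G →* Matrix.SpecialLinearGroup (Fin n) ℂ)
    (hdA : {M : Matrix (Fin m) (Fin m) ℂ | M.det = 1} ⊆
      closure (Set.range fun g : G => ((ρA g : Matrix (Fin m) (Fin m) ℂ))))
    (hdB : {M : Matrix (Fin n) (Fin n) ℂ | M.det = 1} ⊆
      closure (Set.range fun g : G => ((ρB g : Matrix (Fin n) (Fin n) ℂ))))
    (hAB : ∀ g : ℕ → G,
      CauchySeq (fun k => ((ρA (g k) : Matrix (Fin m) (Fin m) ℂ))) →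
      ∃ φ : ℕ → ℕ, StrictMono φ ∧
        CauchySeq (fun j => ((ρB (g (φ j)) : Matrix (Fin n) (Fin n) ℂ))))
    (hBA : ∀ g : ℕ → G,
      CauchySeq (fun k => ((ρB (g k) : Matrix (Fin n) (Fin n) ℂ))) →
      ∃ φ : ℕ → ℕ, StrictMono φ ∧
        CauchySeq (fun j => ((ρA (g (φ j)) : Matrix (Fin m) (Fin m) ℂ)))) :
    (m ≠ n →
      ∀ VA : Matrix (Fin m) (Fin m) ℂ, VA.det = 1 →
      ∀ VB : Matrix (Fin n) (Fin n) ℂ, VB.det = 1 →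
      ∃ g : ℕ → G,
        Tendsto (fun k => ((ρA (g k) : Matrix (Fin m) (Fin m) ℂ))) atTop (nhds VA) ∧
        Tendsto (fun k => ((ρB (g k) : Matrix (Fin n) (Fin n) ℂ))) atTop (nhds VB)) ∧
    (m = n →
      (∀ VA : Matrix (Fin m) (Fin m) ℂ, VA.det = 1 →
        ∀ VB : Matrix (Fin n) (Fin n) ℂ, VB.det = 1 →
        ∃ g : ℕ → G,
          Tendsto (fun k => ((ρA (g k) : Matrix (Fin m) (Fin m) ℂ))) atTop (nhds VA) ∧
          Tendsto (fun k => ((ρB (g k) : Matrix (Fin n) (Fin n) ℂ))) atTop (nhds VB)) ∨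
      ((∀ g : ℕ → G,
          Tendsto (fun k => ((ρA (g k) : Matrix (Fin m) (Fin m) ℂ))) atTop (nhds 1) →
          ∃ φ : ℕ → ℕ, StrictMono φ ∧
            ∃ Z : Matrix (Fin n) (Fin n) ℂ, Z.det = 1 ∧
              (∀ A : Matrix (Fin n) (Fin n) ℂ, A.det = 1 → Z * A = A * Z) ∧
              Tendsto (fun j => ((ρB (g (φ j)) : Matrix (Fin n) (Fin n) ℂ)))
                atTop (nhds Z)) ∧
        (∀ g : ℕ → G,
          Tendsto (fun k => ((ρB (g k) : Matrix (Fin n) (Fin n) ℂ))) atTop (nhds 1) →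
          ∃ φ : ℕ → ℕ, StrictMono φ ∧
            ∃ Z : Matrix (Fin m) (Fin m) ℂ, Z.det = 1 ∧
              (∀ A : Matrix (Fin m) (Fin m) ℂ, A.det = 1 → Z * A = A * Z) ∧
              Tendsto (fun j => ((ρA (g (φ j)) : Matrix (Fin m) (Fin m) ℂ)))
                atTop (nhds Z)))) := by
  obtain ⟨hmn, hcoupledAB, hcoupledBA⟩ := stmt14_general hm hn
    (denseRange_specialLinearGroup_iff.2 hdA) (denseRange_specialLinearGroup_iff.2 hdB)
    (subseqLifts_of_cauchySeq hAB) (subseqLifts_of_cauchySeq hBA)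
  exact ⟨fun hne => absurd hmn hne,
    fun _ => .inr ⟨hcoupledAB.exists_tendsto_commute, hcoupledBA.exists_tendsto_commute⟩⟩
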